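/- Let n ≥ 2 and define r ∈ End(k^n ⊗ k^n) by r(e_j⊗e_ℓ) = sgn(j-ℓ)·((1/2)(e_j⊗e_ℓ + e_ℓ⊗e_j) + ∑_{s strictly between j and ℓ} e_s⊗e_{j+ℓ-s}) - ((j-ℓ)/n)·e_j⊗e_ℓ. Then PrP = -r, where P is the flip operator on k^n⊗k^n. -/

import Mathlib

open TensorProduct Finset

/-!
Conjugating `r` by the flip exchanges both the indices `j, ℓ` of its argument and the two legs of
its value. The sum of the `e_s ⊗ e_{j+ℓ-s}` over `s` strictly between `j` and `ℓ` is symmetric in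
`j, ℓ`, and is fixed by the flip because `s ↦ j + ℓ - s` reverses the interval; the scalars
`sgn (j - ℓ)` and `(j - ℓ) / n` are antisymmetric. So the values on a spanning set of tensors
change sign.
-/

theorem sum_Ioo_reflect_swap {A : Type*} [AddCommMonoid A] (f : ℕ → ℕ → A) (a b : ℕ) :
    ∑ s ∈ Ioo a b, f s (a + b - s) = ∑ s ∈ Ioo a b, f (a + b - s) s := by
  have reflect_mem : ∀ s ∈ Ioo a b, a + b - s ∈ Ioo a b := by
    simp only [mem_Ioo]
    omega
  have reflect_reflect : ∀ s ∈ Ioo a b, a + b - (a + b - s) = s := by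
    simp only [mem_Ioo]
    omega
  refine sum_nbij' (a + b - ·) (a + b - ·) reflect_mem reflect_mem
    reflect_reflect reflect_reflect fun s hs => ?_
  rw [reflect_reflect s hs]

theorem ite_lt_ite_gt_swap_eq_neg {ι A : Type*} [Preorder ι] [DecidableLT ι] [AddGroupWithOne A]
    (i j : ι) :
    (if i < j then (1 : A) else if j < i then -1 else 0) =
      -(if j < i then 1 else if i < j then -1 else 0) := by
  by_cases hij : i < j
  · simp [hij, hij.asymm]
  · by_cases hji : j < i <;> simp [hij, hji]

theorem linearMap_ext_tmul_of_span_eq_top {R M N P ι κ : Type*} [CommSemiring R]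
    [AddCommMonoid M] [AddCommMonoid N] [AddCommMonoid P] [Module R M] [Module R N] [Module R P]
    {e : ι → M} {f : κ → N} (he : Submodule.span R (Set.range e) = ⊤)
    (hf : Submodule.span R (Set.range f) = ⊤) {g h : M ⊗[R] N →ₗ[R] P}
    (hgh : ∀ i j, g (e i ⊗ₜ f j) = h (e i ⊗ₜ f j)) : g = h :=
  TensorProduct.ext <|
    LinearMap.ext_on_range he fun i => LinearMap.ext_on_range hf fun j => hgh i j

section BetweenTensor

variable {R M : Type*} [CommSemiring R] [AddCommMonoid M] [Module R M]

variable (R) in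
/-- The sum of the tensors `e_s ⊗ e_{j+l-s}` over all `s` strictly between `j` and `l`, which
enter the value of `r` at `e_j ⊗ e_l`. The order of `j` and `l` is immaterial, and the truncated
subtraction `j + l - s` is exact on the range of summation. -/
def betweenTensor (e : ℕ → M) (j l : ℕ) : M ⊗[R] M :=
  ∑ s ∈ Ioo (min j l) (max j l), e s ⊗ₜ e (j + l - s)

theorem betweenTensor_swap (e : ℕ → M) (j l : ℕ) :
    betweenTensor R e j l = betweenTensor R e l j := by
  simp only [betweenTensor, min_comm, max_comm, add_comm]

theorem comm_betweenTensor (e : ℕ → M) (j l : ℕ) :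
    TensorProduct.comm R M M (betweenTensor R e j l) = betweenTensor R e j l := by
  simp only [betweenTensor, map_sum, TensorProduct.comm_tmul, ← min_add_max j l]
  exact (sum_Ioo_reflect_swap (fun s t => e s ⊗ₜ[R] e t) (min j l) (max j l)).symm

end BetweenTensor

theorem stmt_19_general {R M : Type*} [CommRing R] [AddCommGroup M] [Module R M]
    {n : ℕ} [NeZero n] {e : Fin n → M} (he : Submodule.span R (Set.range e) = ⊤)
    {a : R} {c d : Fin n → Fin n → R} (hc : ∀ j l, c j l = -c l j) (hd : ∀ j l, d j l = -d l j)
    {r : M ⊗[R] M →ₗ[R] M ⊗[R] M}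
    (hr : ∀ j l, r (e j ⊗ₜ e l) =
      c j l • (a • (e j ⊗ₜ e l + e l ⊗ₜ e j) + betweenTensor R (fun s => e (Fin.ofNat n s)) j l) -
        d j l • (e j ⊗ₜ e l)) :
    (TensorProduct.comm R M M).toLinearMap ∘ₗ r ∘ₗ (TensorProduct.comm R M M).toLinearMap =
      -r := by
  refine linearMap_ext_tmul_of_span_eq_top he he fun j l => ?_
  simp only [LinearMap.comp_apply, LinearEquiv.coe_coe, LinearMap.neg_apply,
    TensorProduct.comm_tmul, hr, map_sub, map_add, map_smul, comm_betweenTensor]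
  rw [betweenTensor_swap _ (l : ℕ), hc l j, hd l j]
  module

/-- Let n ≥ 2 and define r ∈ End(k^n ⊗ k^n) by
r(e_j⊗e_ℓ) = sgn(j-ℓ)((1/2)(e_j⊗e_ℓ + e_ℓ⊗e_j) + ∑_{s strictly between j and ℓ}
e_s⊗e_{j+ℓ-s}) - ((j-ℓ)/n)·e_j⊗e_ℓ.  Then PrP = -r, where P is the flip
operator on k^n⊗k^n.  (Indices s and j+ℓ-s stay in range, so reducing them
mod n below is harmless.) -/
theorem stmt_19 (k : Type*) [Field k] [CharZero k] (n : ℕ) (hn : 2 ≤ n)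
    (e : Fin n → (Fin n → k)) (he : ∀ i, e i = Pi.single i 1)
    (r : ((Fin n → k) ⊗[k] (Fin n → k)) →ₗ[k] ((Fin n → k) ⊗[k] (Fin n → k)))
    (hr : ∀ j ℓ : Fin n, r (e j ⊗ₜ[k] e ℓ) =
      (if (ℓ : ℕ) < (j : ℕ) then (1 : k) else if (j : ℕ) < (ℓ : ℕ) then -1 else 0) •
        ((2 : k)⁻¹ • (e j ⊗ₜ[k] e ℓ + e ℓ ⊗ₜ[k] e j) +
          ∑ s ∈ Ioo (min (j : ℕ) (ℓ : ℕ)) (max (j : ℕ) (ℓ : ℕ)),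
            e ⟨s % n, Nat.mod_lt _ (by omega)⟩ ⊗ₜ[k]
              e ⟨((j : ℕ) + (ℓ : ℕ) - s) % n, Nat.mod_lt _ (by omega)⟩) -
      ((((j : ℕ) : k) - ((ℓ : ℕ) : k)) / (n : k)) • (e j ⊗ₜ[k] e ℓ)) :
    (TensorProduct.comm k (Fin n → k) (Fin n → k)).toLinearMap ∘ₗ r ∘ₗ
      (TensorProduct.comm k (Fin n → k) (Fin n → k)).toLinearMap = -r := by
  have : NeZero n := ⟨by omega⟩
  have span_e : Submodule.span k (Set.range e) = ⊤ := by
    obtain rfl : e = Pi.basisFun k (Fin n) := by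
      ext1 i
      rw [he, Pi.basisFun_apply]
    exact (Pi.basisFun k (Fin n)).span_eq
  exact stmt_19_general span_e (fun j ℓ => ite_lt_ite_gt_swap_eq_neg (ℓ : ℕ) (j : ℕ))
    (fun j ℓ => by rw [← neg_div, neg_sub]) hr
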